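/- Let V be a symplectic vector space, C a coisotropic subspace of V, and L₁, L₂ Lagrangian subspaces of V. Then, as integers, d(L₁^C, L₂^C) ≤ d(L₁, L₂) − |E^C(L₁) − E^C(L₂)|, where E^C(L) := dim(L ∩ Cᗮ) is the excess of L relative to C. -/

import Mathlib

/-!
Write `W^C = (W ⊓ C) ⊔ Cᗮ` and `E(W) = dim (W ⊓ Cᗮ)` for an arbitrary subspace `W`. Counting the
dimensions of `W ⊔ C`, `W ⊓ C` and `(W ⊔ C)ᗮ = Wᗮ ⊓ Cᗮ` shows that the defect
`dim W + E(Wᗮ) - E(W) - dim W^C` is nondecreasing in `W`, because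
`dim W + dim Wᗮ = dim V + dim (W ⊓ ker ω)` is; it vanishes if the form is nondegenerate.

Compare the defects of `L₁ ⊓ L₂` and `L₁`. The space `(L₁ ⊓ L₂)^C` lies in both `L₁^C` and
`L₂^C`, so that `d(L₁^C, L₂^C)` is at most `d(L₁, L₂)` minus the two nonnegative numbers
`E(L₁) - E(L₁ ⊓ L₂)` and `E((L₁ ⊓ L₂)ᗮ) - E(L₁ᗮ)`. For Lagrangian `L₁`, `L₂` the first is at least
`E(L₁) - E(L₂)` and the second at least `E(L₂) - E(L₁)`.
-/

open Module

theorem bilinForm_orthogonal_sup {R M : Type*} [CommSemiring R] [AddCommMonoid M] [Module R M]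
    (ω : LinearMap.BilinForm R M) (A B : Submodule R M) :
    ω.orthogonal (A ⊔ B) = ω.orthogonal A ⊓ ω.orthogonal B := by
  refine le_antisymm (le_inf (LinearMap.BilinForm.orthogonal_le le_sup_left)
    (LinearMap.BilinForm.orthogonal_le le_sup_right)) ?_
  rintro x ⟨hA, hB⟩ y hy
  obtain ⟨a, ha, b, hb, rfl⟩ := Submodule.mem_sup.1 hy
  have hax : ω a x = 0 := hA a ha
  have hbx : ω b x = 0 := hB b hb
  rw [LinearMap.BilinForm.add_left, hax, hbx, add_zero]

section Definitions

variable {K V : Type*} [Field K] [AddCommGroup V] [Module K V]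

/-- The Chow distance of two subspaces, with values in `ℤ` to avoid truncated subtraction. It is
symmetric only for subspaces of equal dimension. -/
noncomputable def chowDist (A B : Submodule K V) : ℤ :=
  (finrank K A : ℤ) - finrank K ↥(A ⊓ B)

/-- The reduction of `W` by a coisotropic subspace `C`, encoded by its preimage in `V` rather than
as a subspace of `C / Cᗮ`. -/
def coisotropicReduction (ω : LinearMap.BilinForm K V) (C W : Submodule K V) : Submodule K V :=
  (W ⊓ C) ⊔ ω.orthogonal C

/-- The excess of `W` relative to `C`, which measures the part of `W` collapsed by reduction. -/
noncomputable def excess (ω : LinearMap.BilinForm K V) (C W : Submodule K V) : ℕ :=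
  finrank K ↥(W ⊓ ω.orthogonal C)

end Definitions

section Reduction

variable {K V : Type*} [Field K] [AddCommGroup V] [Module K V]

theorem coisotropicReduction_mono (ω : LinearMap.BilinForm K V) (C : Submodule K V) :
    Monotone (coisotropicReduction ω C) :=
  fun _ _ h ↦ sup_le_sup_right (inf_le_inf_right C h) _

variable [FiniteDimensional K V]

theorem excess_mono (ω : LinearMap.BilinForm K V) (C : Submodule K V) :
    Monotone (excess ω C) :=
  fun _ _ h ↦ Submodule.finrank_mono (inf_le_inf_right _ h)

theorem finrank_add_finrank_orthogonal_mono (ω : LinearMap.BilinForm K V) :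
    Monotone fun W : Submodule K V ↦ finrank K W + finrank K (ω.orthogonal W) := by
  intro A B hAB
  simp only [LinearMap.BilinForm.finrank_add_finrank_orthogonal']
  exact Nat.add_le_add_left (Submodule.finrank_mono (inf_le_inf_right _ hAB)) _

variable {ω : LinearMap.BilinForm K V} {C : Submodule K V}

theorem finrank_coisotropicReduction_add_excess (hC : ω.orthogonal C ≤ C) (W : Submodule K V) :
    finrank K (coisotropicReduction ω C W) + excess ω C W =
      finrank K ↥(W ⊓ C) + finrank K (ω.orthogonal C) := by
  rw [coisotropicReduction, excess, ← Submodule.finrank_sup_add_finrank_inf_eq (W ⊓ C),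
    inf_assoc, inf_eq_right.2 hC]

theorem finrank_inf_sub_finrank_inf_le (ω : LinearMap.BilinForm K V) (C : Submodule K V)
    {A B : Submodule K V} (hAB : A ≤ B) :
    (finrank K ↥(B ⊓ C) : ℤ) - finrank K ↥(A ⊓ C) ≤
      finrank K B - finrank K A
        - (excess ω C (ω.orthogonal A) - excess ω C (ω.orthogonal B)) := by
  have hmono : finrank K ↥(A ⊔ C) + finrank K (ω.orthogonal (A ⊔ C)) ≤
      finrank K ↥(B ⊔ C) + finrank K (ω.orthogonal (B ⊔ C)) :=
    finrank_add_finrank_orthogonal_mono ω (sup_le_sup_right hAB C)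
  rw [bilinForm_orthogonal_sup, bilinForm_orthogonal_sup] at hmono
  have hA := Submodule.finrank_sup_add_finrank_inf_eq A C
  have hB := Submodule.finrank_sup_add_finrank_inf_eq B C
  unfold excess
  lia

theorem finrank_coisotropicReduction_sub_le (hC : ω.orthogonal C ≤ C) {A B : Submodule K V}
    (hAB : A ≤ B) :
    (finrank K (coisotropicReduction ω C B) : ℤ) - finrank K (coisotropicReduction ω C A) ≤
      finrank K B - finrank K A - (excess ω C B - excess ω C A)
        - (excess ω C (ω.orthogonal A) - excess ω C (ω.orthogonal B)) := by
  have hinf := finrank_inf_sub_finrank_inf_le ω C hAB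
  have hA := finrank_coisotropicReduction_add_excess hC A
  have hB := finrank_coisotropicReduction_add_excess hC B
  lia

theorem chowDist_coisotropicReduction_le (hC : ω.orthogonal C ≤ C) (A B : Submodule K V) :
    chowDist (coisotropicReduction ω C A) (coisotropicReduction ω C B) ≤
      chowDist A B - (excess ω C A - excess ω C (A ⊓ B))
        - (excess ω C (ω.orthogonal (A ⊓ B)) - excess ω C (ω.orthogonal A)) := by
  have hinf : finrank K (coisotropicReduction ω C (A ⊓ B)) ≤
      finrank K ↥(coisotropicReduction ω C A ⊓ coisotropicReduction ω C B) :=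
    Submodule.finrank_mono ((coisotropicReduction_mono ω C).map_inf_le A B)
  have hsub := finrank_coisotropicReduction_sub_le hC (inf_le_left : A ⊓ B ≤ A)
  unfold chowDist
  lia

end Reduction

theorem chow_distance_reduction_le_sub_excess_general {K V : Type*} [Field K] [AddCommGroup V]
    [Module K V] [FiniteDimensional K V] (ω : LinearMap.BilinForm K V) {C L₁ L₂ : Submodule K V}
    (hC : ω.orthogonal C ≤ C) (h₁ : ω.orthogonal L₁ ≤ L₁) (h₂ : L₂ ≤ ω.orthogonal L₂) :
    chowDist (coisotropicReduction ω C L₁) (coisotropicReduction ω C L₂) ≤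
      chowDist L₁ L₂ - |(excess ω C L₁ : ℤ) - excess ω C L₂| := by
  have hdist := chowDist_coisotropicReduction_le hC L₁ L₂
  have hinf₁ : excess ω C (L₁ ⊓ L₂) ≤ excess ω C L₁ := excess_mono ω C inf_le_left
  have hinf₂ : excess ω C (L₁ ⊓ L₂) ≤ excess ω C L₂ := excess_mono ω C inf_le_right
  have horth : excess ω C (ω.orthogonal L₁) ≤ excess ω C (ω.orthogonal (L₁ ⊓ L₂)) :=
    excess_mono ω C (LinearMap.BilinForm.orthogonal_le inf_le_left)
  have hcoiso : excess ω C (ω.orthogonal L₁) ≤ excess ω C L₁ := excess_mono ω C h₁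
  have hiso : excess ω C L₂ ≤ excess ω C (ω.orthogonal (L₁ ⊓ L₂)) :=
    excess_mono ω C (h₂.trans (LinearMap.BilinForm.orthogonal_le inf_le_right))
  rw [le_sub_comm, abs_sub_le_iff]
  constructor <;> lia

/-- The strengthened distance inequality for symplectic reduction: for a coisotropic `C` and
Lagrangians `L₁, L₂` in a symplectic vector space `V`, with reductions represented by
`Λᵢ = (Lᵢ ⊓ C) ⊔ Cᗮ` and excesses `E^C(Lᵢ) = dim (Lᵢ ⊓ Cᗮ)`, one has (as integers)
`d(L₁^C, L₂^C) ≤ d(L₁, L₂) - |E^C(L₁) - E^C(L₂)|`. -/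
theorem chow_distance_reduction_le_sub_excess
    (V : Type*) [AddCommGroup V] [Module ℝ V] [FiniteDimensional ℝ V]
    (ω : LinearMap.BilinForm ℝ V) (hnd : ω.Nondegenerate) (halt : ω.IsAlt)
    (C : Submodule ℝ V) (hC : ω.orthogonal C ≤ C)
    (L₁ L₂ : Submodule ℝ V) (h₁ : ω.orthogonal L₁ = L₁) (h₂ : ω.orthogonal L₂ = L₂) :
    (finrank ℝ ↥((L₁ ⊓ C) ⊔ ω.orthogonal C) : ℤ) -
        finrank ℝ ↥(((L₁ ⊓ C) ⊔ ω.orthogonal C) ⊓ ((L₂ ⊓ C) ⊔ ω.orthogonal C)) ≤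
      ((finrank ℝ L₁ : ℤ) - finrank ℝ ↥(L₁ ⊓ L₂)) -
        |(finrank ℝ ↥(L₁ ⊓ ω.orthogonal C) : ℤ) - finrank ℝ ↥(L₂ ⊓ ω.orthogonal C)| :=
  chow_distance_reduction_le_sub_excess_general ω hC h₁.le h₂.ge
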